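/- For any four affinely independent points A, B, C, D in ℝ³, the tetrahedron they span is stable on at least two of its four faces when the load point is the centroid (A + B + C + D)/4 of the vertices; that is, a homogeneous tetrahedron is gravitationally stable on at least two faces. -/

import Mathlib

open RealInnerProductSpace

noncomputable section

abbrev E3 : Type := EuclideanSpace ℝ (Fin 3)

/-- The tetrahedron with load point `p` is *stable* on the face with vertices
`v₁, v₂, v₃`: the orthogonal projection of `p` onto the affine span of the face
lies in the relative (intrinsic) interior of the face. -/
def StableOn (p v₁ v₂ v₃ : E3) : Prop :=
  ∃ q ∈ intrinsicInterior ℝ (convexHull ℝ ({v₁, v₂, v₃} : Set E3)),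
    ∀ w ∈ (affineSpan ℝ ({v₁, v₂, v₃} : Set E3)).direction, ⟪p - q, w⟫ = 0

/-- Placed on the face with vertices `apex, e₁, e₂` and load point `p`, the
tetrahedron *tips over* the edge `e₁e₂` onto the adjacent face: the orthogonal
projection `q` of `p` onto the plane of the face lies strictly on the opposite
side of the line through `e₁, e₂` from the remaining vertex `apex`. -/
def TipsOver (p apex e₁ e₂ : E3) : Prop :=
  ∃ q ∈ affineSpan ℝ ({apex, e₁, e₂} : Set E3),
    (∀ w ∈ (affineSpan ℝ ({apex, e₁, e₂} : Set E3)).direction, ⟪p - q, w⟫ = 0) ∧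
    (affineSpan ℝ ({e₁, e₂} : Set E3)).SOppSide q apex

/-- The edge `PQ` of the tetrahedron `PQRS` is *obtuse*: writing `R'`, `S'` for
the components of `R - P`, `S - P` orthogonal to `Q - P`, we have `⟪R', S'⟫ < 0`. -/
def ObtuseEdge (P Q R S : E3) : Prop :=
  ⟪(R - P) - (⟪R - P, Q - P⟫ / ⟪Q - P, Q - P⟫) • (Q - P),
   (S - P) - (⟪S - P, Q - P⟫ / ⟪Q - P, Q - P⟫) • (Q - P)⟫ < 0

/-- Stability on the `i`-th face of tetrahedron `ABCD` (the face opposite the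
`i`-th vertex). -/
def FaceStable (A B C D p : E3) : Fin 4 → Prop
  | 0 => StableOn p B C D
  | 1 => StableOn p A C D
  | 2 => StableOn p A B D
  | 3 => StableOn p A B C

/-!
Let `gᵢ` be the gradients of the barycentric coordinates of a simplex; they sum to zero. Moving the
centroid orthogonally onto the facet opposite vertex `i` means moving along `gᵢ`, so the projection
has `j`-th barycentric coordinate proportional to `‖gᵢ‖² - ⟪gᵢ, gⱼ⟫`, and the simplex is stable on
that facet iff `⟪gᵢ, gⱼ⟫ < ‖gᵢ‖²` for all `j ≠ i`. For a tetrahedron order the gradients as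
`‖g₀‖ ≤ ‖g₁‖ ≤ ‖g₂‖ ≤ ‖g₃‖`. Facet `3` is always stable by Cauchy–Schwarz. If facet `2` is not, then
`⟪g₂, g₃⟫ > 0`, and `g₁ = -(g₀ + g₂ + g₃)` makes an obtuse angle with both `g₂` and `g₃` because
`g₀` is too short to compensate. As also `‖g₀‖ ≤ ‖g₁‖`, facet `1` is stable.
-/

section InnerProductSpace

variable {V : Type*} [NormedAddCommGroup V] [InnerProductSpace ℝ V]

lemma inner_lt_norm_sq_of_norm_le {x y : V} (hne : x ≠ y) (hle : ‖y‖ ≤ ‖x‖) :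
    ⟪x, y⟫ < ‖x‖ ^ 2 := by
  have hpos : 0 < ‖x - y‖ ^ 2 := pow_pos (norm_sub_pos_iff.2 hne) 2
  have hsq : ‖y‖ ^ 2 ≤ ‖x‖ ^ 2 := pow_le_pow_left₀ (norm_nonneg y) hle 2
  rw [norm_sub_sq_real] at hpos
  linarith

lemma inner_neg_of_add_eq_zero {a b c d : V} (hsum : a + b + c + d = 0)
    (hac : ‖a‖ ≤ ‖c‖) (hcd : 0 < ⟪c, d⟫) : ⟪b, c⟫ < 0 := by
  have hexpand : ⟪c, a⟫ + ⟪b, c⟫ + ‖c‖ ^ 2 + ⟪c, d⟫ = 0 := by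
    rw [real_inner_comm c b, ← real_inner_self_eq_norm_sq, ← inner_add_right, ← inner_add_right,
      ← inner_add_right, hsum, inner_zero_right]
  have hca : -‖c‖ ^ 2 ≤ ⟪c, a⟫ := calc
    -‖c‖ ^ 2 = -(‖c‖ * ‖c‖) := by rw [sq]
    _ ≤ -(‖c‖ * ‖a‖) := neg_le_neg (mul_le_mul_of_nonneg_left hac (norm_nonneg c))
    _ ≤ ⟪c, a⟫ := (abs_le.1 (abs_real_inner_le_norm c a)).1
  linarith

lemma exists_ne_forall_inner_lt_of_monotone {g : Fin 4 → V} (hmono : Monotone fun i ↦ ‖g i‖)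
    (hinj : Function.Injective g) (hsum : ∑ i, g i = 0) :
    ∃ i j, i ≠ j ∧ (∀ k ≠ i, ⟪g i, g k⟫ < ‖g i‖ ^ 2) ∧ ∀ k ≠ j, ⟪g j, g k⟫ < ‖g j‖ ^ 2 := by
  have hlt {i k} (hki : k < i) : ⟪g i, g k⟫ < ‖g i‖ ^ 2 :=
    inner_lt_norm_sq_of_norm_le (hinj.ne hki.ne') (hmono hki.le)
  have hthree : ∀ k ≠ 3, ⟪g 3, g k⟫ < ‖g 3‖ ^ 2 := fun k hk ↦ hlt (Fin.lt_last_iff_ne_last.2 hk)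
  by_cases htwo : ⟪g 2, g 3⟫ < ‖g 2‖ ^ 2
  · refine ⟨3, 2, by decide, hthree, fun k hk ↦ ?_⟩
    obtain hk | rfl : k < 2 ∨ k = 3 := by lia
    exacts [hlt hk, htwo]
  · have hne : g 2 ≠ 0 := fun hzero ↦ by
      have hnorm : ‖g 0‖ ≤ ‖g 2‖ := hmono (by decide)
      rw [hzero, norm_zero, norm_le_zero_iff, ← hzero] at hnorm
      exact absurd (hinj hnorm) (by decide)
    have hpos : 0 < ⟪g 2, g 3⟫ := (pow_pos (norm_pos_iff.2 hne) 2).trans_le (not_lt.1 htwo)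
    rw [Fin.sum_univ_four] at hsum
    have hneg₂ : ⟪g 1, g 2⟫ < 0 := inner_neg_of_add_eq_zero hsum (hmono (by decide)) hpos
    have hneg₃ : ⟪g 1, g 3⟫ < 0 :=
      inner_neg_of_add_eq_zero (a := g 0) (b := g 1) (c := g 3) (d := g 2)
        (by rw [← hsum]; abel) (hmono (by decide)) (by rwa [real_inner_comm])
    refine ⟨3, 1, by decide, hthree, fun k hk ↦ ?_⟩
    obtain rfl | rfl | rfl : k = 0 ∨ k = 2 ∨ k = 3 := by lia
    exacts [hlt (by decide), hneg₂.trans_le (sq_nonneg _), hneg₃.trans_le (sq_nonneg _)]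

lemma exists_ne_forall_inner_lt {g : Fin 4 → V} (hinj : Function.Injective g)
    (hsum : ∑ i, g i = 0) :
    ∃ i j, i ≠ j ∧ (∀ k ≠ i, ⟪g i, g k⟫ < ‖g i‖ ^ 2) ∧ ∀ k ≠ j, ⟪g j, g k⟫ < ‖g j‖ ^ 2 := by
  let σ := Tuple.sort fun i ↦ ‖g i‖
  obtain ⟨i, j, hij, hi, hj⟩ := exists_ne_forall_inner_lt_of_monotone (g := g ∘ σ)
    (Tuple.monotone_sort fun i ↦ ‖g i‖) (hinj.comp σ.injective) ((Equiv.sum_comp σ g).trans hsum)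
  have htransfer {i} (hi : ∀ k ≠ i, ⟪g (σ i), g (σ k)⟫ < ‖g (σ i)‖ ^ 2) :
      ∀ k ≠ σ i, ⟪g (σ i), g k⟫ < ‖g (σ i)‖ ^ 2 :=
    σ.surjective.forall.2 fun k hk ↦ hi k (ne_of_apply_ne σ hk)
  exact ⟨σ i, σ j, σ.injective.ne hij, htransfer hi, htransfer hj⟩

end InnerProductSpace

section Simplex

open Affine Affine.Simplex EuclideanGeometry Finset

variable {V P : Type*} [NormedAddCommGroup V] [InnerProductSpace ℝ V] [MetricSpace P]
  [NormedAddTorsor V P]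
variable {n : ℕ}

/-- The gradient of the `i`-th barycentric coordinate of a simplex, as a vector of the direction of
its affine span: the altitude vector from the opposite face to the vertex `i`, divided by the
square of its length. -/
def barycentricGradient [NeZero n] (s : Simplex ℝ P n) (i : Fin (n + 1)) : V :=
  (s.height i)⁻¹ ^ 2 • (s.points i -ᵥ s.altitudeFoot i)

section Gradient

variable [NeZero n] (s : Simplex ℝ P n)

lemma barycentricGradient_mem_vectorSpan (i : Fin (n + 1)) :
    barycentricGradient s i ∈ vectorSpan ℝ (Set.range s.points) :=
  Submodule.smul_mem _ _ <| vsub_mem_vectorSpan_of_mem_affineSpan_of_mem_affineSpan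
    (mem_affineSpan ℝ (Set.mem_range_self i)) (s.altitudeFoot_mem_affineSpan i)

lemma barycentricGradient_mem_orthogonal (i : Fin (n + 1)) :
    barycentricGradient s i ∈ (affineSpan ℝ (Set.range (s.faceOpposite i).points)).directionᗮ :=
  Submodule.smul_mem _ _ <| vsub_orthogonalProjection_mem_direction_orthogonal _ _

lemma sum_barycentricGradient : ∑ i, barycentricGradient s i = 0 :=
  s.sum_inv_height_sq_smul_vsub_eq_zero

lemma inner_barycentricGradient_vsub_of_ne {i j : Fin (n + 1)} (hij : i ≠ j) :
    ⟪barycentricGradient s i, s.points i -ᵥ s.points j⟫ = 1 := by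
  rw [barycentricGradient, real_inner_smul_left, real_inner_comm,
    s.inner_vsub_vsub_altitudeFoot_eq_height_sq hij, ← mul_pow,
    inv_mul_cancel₀ (s.height_pos i).ne', one_pow]

lemma inner_barycentricGradient_vsub (i a b : Fin (n + 1)) :
    ⟪barycentricGradient s i, s.points a -ᵥ s.points b⟫ = weightedVSubVSubWeights ℝ a b i := by
  obtain rfl | hab := eq_or_ne a b
  · simp
  obtain rfl | hia := eq_or_ne i a
  · rw [inner_barycentricGradient_vsub_of_ne s hab, weightedVSubVSubWeights_apply_left ℝ hab]
  obtain rfl | hib := eq_or_ne i b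
  · rw [← neg_vsub_eq_vsub_rev, inner_neg_right, inner_barycentricGradient_vsub_of_ne s hia,
      weightedVSubVSubWeights_apply_right ℝ hab]
  · rw [← vsub_sub_vsub_cancel_left (s.points a) (s.points b) (s.points i), inner_sub_right,
      inner_barycentricGradient_vsub_of_ne s hia, inner_barycentricGradient_vsub_of_ne s hib,
      sub_self, weightedVSubVSubWeights_apply_of_ne ℝ hia hib]

lemma barycentricGradient_injective : Function.Injective (barycentricGradient s) := by
  intro i j hg
  by_contra hij
  have hone := inner_barycentricGradient_vsub_of_ne s hij
  rw [hg, ← neg_vsub_eq_vsub_rev, inner_neg_right,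
    inner_barycentricGradient_vsub_of_ne s (Ne.symm hij)] at hone
  norm_num at hone

lemma barycentricGradient_ne_zero (i : Fin (n + 1)) : barycentricGradient s i ≠ 0 :=
  smul_ne_zero (pow_ne_zero 2 (inv_ne_zero (s.height_pos i).ne'))
    (vsub_ne_zero.2 (s.ne_altitudeFoot i))

lemma sum_inner_barycentricGradient (v : V) : ∑ i, ⟪barycentricGradient s i, v⟫ = 0 := by
  rw [← sum_inner, sum_barycentricGradient, inner_zero_left]

lemma weightedVSub_inner_barycentricGradient {v : V}
    (hv : v ∈ vectorSpan ℝ (Set.range s.points)) :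
    univ.weightedVSub s.points (fun i ↦ ⟪barycentricGradient s i, v⟫) = v := by
  let pairing : V →ₗ[ℝ] Fin (n + 1) → ℝ :=
    LinearMap.pi fun i ↦ (innerₗ V) (barycentricGradient s i)
  refine LinearMap.eqOn_span' (f := univ.weightedVSub s.points ∘ₗ pairing) (g := LinearMap.id) ?_ hv
  rintro _ ⟨_, ⟨a, rfl⟩, _, ⟨b, rfl⟩, rfl⟩
  have hpairing : pairing (s.points a -ᵥ s.points b) = weightedVSubVSubWeights ℝ a b :=
    funext fun i ↦ inner_barycentricGradient_vsub s i a b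
  simp only [LinearMap.comp_apply, hpairing, LinearMap.id_apply]
  exact univ.weightedVSub_weightedVSubVSubWeights ℝ s.points (mem_univ a) (mem_univ b)

lemma vadd_affineCombination_eq {v : V} (hv : v ∈ vectorSpan ℝ (Set.range s.points))
    (w : Fin (n + 1) → ℝ) :
    v +ᵥ univ.affineCombination ℝ s.points w =
      univ.affineCombination ℝ s.points fun i ↦ ⟪barycentricGradient s i, v⟫ + w i := by
  nth_rw 1 [← weightedVSub_inner_barycentricGradient s hv]
  exact univ.weightedVSub_vadd_affineCombination _ w s.points

lemma sum_inner_barycentricGradient_add (v : V) (w : Fin (n + 1) → ℝ) :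
    ∑ i, (⟪barycentricGradient s i, v⟫ + w i) = ∑ i, w i := by
  rw [sum_add_distrib, sum_inner_barycentricGradient, zero_add]

lemma interior_subset_intrinsicInterior_closedInterior :
    s.interior ⊆ intrinsicInterior ℝ s.closedInterior := by
  rintro _ ⟨w, hw, hw01, rfl⟩
  let x := univ.affineCombination ℝ s.points w
  have hx : x ∈ affineSpan ℝ (Set.range s.points) := affineCombination_mem_affineSpan hw s.points
  have hspan : affineSpan ℝ s.closedInterior ≤ affineSpan ℝ (Set.range s.points) :=
    affineSpan_le.2 closedInterior_subset_affineSpan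
  let U : Set (affineSpan ℝ s.closedInterior) :=
    {y | ∀ i, 0 < ⟪barycentricGradient s i, (y : P) -ᵥ x⟫ + w i}
  have hU : IsOpen U := by
    simp only [U, Set.ofPred_forall]
    exact isOpen_iInter_of_finite fun i ↦ isOpen_lt continuous_const (by fun_prop)
  have hUsub : U ⊆ (↑) ⁻¹' s.closedInterior := fun y hy ↦ by
    have hyx : (y : P) -ᵥ x ∈ vectorSpan ℝ (Set.range s.points) :=
      vsub_mem_vectorSpan_of_mem_affineSpan_of_mem_affineSpan (hspan y.2) hx
    have hsum := (sum_inner_barycentricGradient_add s ((y : P) -ᵥ x) w).trans hw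
    rw [Set.mem_preimage, ← vsub_vadd (y : P) x, vadd_affineCombination_eq s hyx w,
      affineCombination_mem_closedInterior_iff hsum]
    exact fun i ↦ ⟨(hy i).le, hsum ▸ single_le_sum (fun j _ ↦ (hy j).le) (mem_univ i)⟩
  refine ⟨⟨x, subset_affineSpan ℝ _ (interior_subset_closedInterior s ⟨w, hw, hw01, rfl⟩)⟩,
    mem_interior.2 ⟨U, hUsub, hU, fun i ↦ ?_⟩, rfl⟩
  simpa using (hw01 i).1

lemma coe_orthogonalProjectionSpan_faceOpposite_affineCombination {w : Fin (n + 1) → ℝ}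
    (hw : ∑ i, w i = 1) (i : Fin (n + 1)) :
    ((s.faceOpposite i).orthogonalProjectionSpan (univ.affineCombination ℝ s.points w) : P) =
      univ.affineCombination ℝ s.points fun j ↦
        w j - w i * ⟪barycentricGradient s i, barycentricGradient s j⟫ /
          ‖barycentricGradient s i‖ ^ 2 := by
  set g := barycentricGradient s
  set v : V := -((w i / ‖g i‖ ^ 2) • g i) with hv
  have hnorm : ‖g i‖ ^ 2 ≠ 0 := pow_ne_zero 2 (norm_ne_zero_iff.2 (barycentricGradient_ne_zero s i))
  have hweights : (fun j ↦ w j - w i * ⟪g i, g j⟫ / ‖g i‖ ^ 2) = fun j ↦ ⟪g j, v⟫ + w j := by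
    funext j
    rw [hv, inner_neg_right, real_inner_smul_right, real_inner_comm]
    ring
  have hvmem : v ∈ vectorSpan ℝ (Set.range s.points) :=
    neg_mem (Submodule.smul_mem _ _ (barycentricGradient_mem_vectorSpan s i))
  rw [hweights, orthogonalProjectionSpan, coe_orthogonalProjection_eq_iff_mem]
  constructor
  · rw [affineCombination_mem_affineSpan_faceOpposite_iff
      ((sum_inner_barycentricGradient_add s v w).trans hw), hv, inner_neg_right,
      real_inner_smul_right, real_inner_self_eq_norm_sq, div_mul_cancel₀ _ hnorm, neg_add_cancel]
  · rw [← vadd_affineCombination_eq s hvmem, vsub_vadd_eq_vsub_sub, vsub_self, zero_sub, hv,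
      neg_neg]
    exact Submodule.smul_mem _ _ (barycentricGradient_mem_orthogonal s i)

end Gradient

section StableOnFacet

/-- A simplex with load point `p` is stable on the facet opposite its `i`-th vertex: the orthogonal
projection of `p` to that facet is a convex combination of the vertices of the facet with weights
strictly between `0` and `1`. For a tetrahedron this is the notion `FaceStable`. -/
def StableOnFacet [NeZero n] (s : Simplex ℝ P n) (p : P) (i : Fin (n + 1)) : Prop :=
  ((s.faceOpposite i).orthogonalProjectionSpan p : P) ∈ (s.faceOpposite i).interior

attribute [local instance] Nat.AtLeastTwo.neZero_sub_one

lemma stableOnFacet_affineCombination_iff [n.AtLeastTwo] (s : Simplex ℝ P n)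
    {w : Fin (n + 1) → ℝ} (hw : ∑ i, w i = 1) (i : Fin (n + 1)) :
    StableOnFacet s (univ.affineCombination ℝ s.points w) i ↔
      ∀ j ≠ i, w i * ⟪barycentricGradient s i, barycentricGradient s j⟫ <
        w j * ‖barycentricGradient s i‖ ^ 2 := by
  have hnorm : 0 < ‖barycentricGradient s i‖ ^ 2 :=
    pow_pos (norm_pos_iff.2 (barycentricGradient_ne_zero s i)) 2
  have hsum : ∑ j, (w j - w i * ⟪barycentricGradient s i, barycentricGradient s j⟫ /
      ‖barycentricGradient s i‖ ^ 2) = 1 := by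
    rw [sum_sub_distrib, ← sum_div, ← mul_sum, ← inner_sum, sum_barycentricGradient,
      inner_zero_right, mul_zero, zero_div, sub_zero, hw]
  rw [StableOnFacet, coe_orthogonalProjectionSpan_faceOpposite_affineCombination s hw, faceOpposite,
    affineCombination_mem_interior_face_iff_pos s _ hsum]
  simp only [mem_compl, mem_singleton, not_not, forall_eq, sub_pos, div_lt_iff₀ hnorm,
    real_inner_self_eq_norm_sq, mul_div_cancel_right₀ _ hnorm.ne', sub_self, and_true, ne_eq]

lemma stableOnFacet_centroid_iff [n.AtLeastTwo] (s : Simplex ℝ P n) (i : Fin (n + 1)) :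
    StableOnFacet s s.centroid i ↔
      ∀ j ≠ i, ⟪barycentricGradient s i, barycentricGradient s j⟫ <
        ‖barycentricGradient s i‖ ^ 2 := by
  have hpos : 0 < ((n + 1 : ℕ) : ℝ)⁻¹ := by positivity
  rw [centroid_eq_affineCombination, stableOnFacet_affineCombination_iff s
    (sum_centroidWeights_eq_one_of_nonempty ℝ univ univ_nonempty)]
  simp only [centroidWeights_apply, card_univ, Fintype.card_fin, mul_lt_mul_iff_right₀ hpos]

theorem homogeneous_tetrahedron_stable_on_two_faces_general (T : Simplex ℝ P 3) :
    ∃ i j, i ≠ j ∧ StableOnFacet T T.centroid i ∧ StableOnFacet T T.centroid j := by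
  simp only [stableOnFacet_centroid_iff]
  exact exists_ne_forall_inner_lt (barycentricGradient_injective T) (sum_barycentricGradient T)

end StableOnFacet

section Tetrahedron

lemma StableOnFacet.stableOn {s : Simplex ℝ E3 3} {p v₁ v₂ v₃ : E3} {i : Fin 4}
    (h : StableOnFacet s p i) (hv : s.points '' {i}ᶜ = {v₁, v₂, v₃}) :
    StableOn p v₁ v₂ v₃ := by
  rw [← range_faceOpposite_points] at hv
  rw [StableOn, ← hv, convexHull_eq_closedInterior]
  refine ⟨_, interior_subset_intrinsicInterior_closedInterior _ h, fun w hw ↦ ?_⟩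
  exact Submodule.inner_left_of_mem_orthogonal hw <|
    vsub_orthogonalProjection_mem_direction_orthogonal _ p

lemma StableOnFacet.faceStable {A B C D p : E3} {h : AffineIndependent ℝ ![A, B, C, D]}
    {i : Fin 4} (hi : StableOnFacet ⟨![A, B, C, D], h⟩ p i) : FaceStable A B C D p i := by
  fin_cases i <;>
    exact StableOnFacet.stableOn hi (by ext x; simp [Fin.exists_fin_succ, eq_comm])

lemma centroid_tetrahedron {A B C D : E3} (h : AffineIndependent ℝ ![A, B, C, D]) :
    (⟨![A, B, C, D], h⟩ : Simplex ℝ E3 3).centroid = (4 : ℝ)⁻¹ • (A + B + C + D) := calc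
  _ = (⟨![A, B, C, D], h⟩ : Simplex ℝ E3 3).centroid -ᵥ (0 : E3) := (sub_zero _).symm
  _ = ((3 : ℕ) + 1 : ℝ)⁻¹ • ∑ i : Fin 4, (![A, B, C, D] i -ᵥ 0) := centroid_vsub_eq _ 0
  _ = (4 : ℝ)⁻¹ • (A + B + C + D) := by
    rw [Fin.sum_univ_four, show ((3 : ℕ) + 1 : ℝ) = 4 by norm_num]
    simp only [vsub_eq_sub, sub_zero]
    rfl

end Tetrahedron

end Simplex

/-- **A homogeneous tetrahedron is stable on at least two faces**: for any four
affinely independent points `A, B, C, D` in ℝ³, the tetrahedron loaded at the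
vertex centroid `(A + B + C + D)/4` is stable on at least two of its four faces. -/
theorem homogeneous_tetrahedron_stable_on_two_faces (A B C D : E3)
    (h : AffineIndependent ℝ ![A, B, C, D]) :
    ∃ i j : Fin 4, i ≠ j ∧
      FaceStable A B C D ((4 : ℝ)⁻¹ • (A + B + C + D)) i ∧
      FaceStable A B C D ((4 : ℝ)⁻¹ • (A + B + C + D)) j := by
  obtain ⟨i, j, hij, hi, hj⟩ := homogeneous_tetrahedron_stable_on_two_faces_general ⟨_, h⟩
  exact centroid_tetrahedron h ▸ ⟨i, j, hij, hi.faceStable, hj.faceStable⟩
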